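/- For every integer k ≥ 2 that is not of the form 3·2ⁿ with n ≥ 0, one has β_k ≥ β_c. -/

import Mathlib

open Filter Set

noncomputable section

namespace FatSierpinski

/-- The digit set Ω = {(0,0),(1,0),(0,1)} ⊆ ℝ². -/
def OmegaR : Set (ℝ × ℝ) := {(0, 0), (1, 0), (0, 1)}

/-- The fat Sierpinski gasket `S_β` (sequences are 0-indexed: `d i` is the digit d_{i+1}). -/
def Sfat (β : ℝ) : Set (ℝ × ℝ) :=
  {x | ∃ d : ℕ → ℝ × ℝ, (∀ i, d i ∈ OmegaR) ∧ x = ∑' i : ℕ, (β ^ (i + 1))⁻¹ • d i}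

/-- The convex hull `Δ_β` of `S_β`. -/
def Delta (β : ℝ) : Set (ℝ × ℝ) := convexHull ℝ (Sfat β)

/-- The map `f_d(x) = (x + d)/β`. -/
def fmap (β : ℝ) (d : ℝ × ℝ) (x : ℝ × ℝ) : ℝ × ℝ := β⁻¹ • (x + d)

/-- The overlap region `O_β = ⋃_{c ≠ d ∈ Ω} f_c(Δ_β) ∩ f_d(Δ_β)`. -/
def Ofat (β : ℝ) : Set (ℝ × ℝ) :=
  ⋃ c ∈ OmegaR, ⋃ d ∈ OmegaR, ⋃ (_ : c ≠ d), (fmap β c '' Delta β) ∩ (fmap β d '' Delta β)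

/-- The univoque set of codings `𝐔_β`. -/
def Ufat (β : ℝ) : Set (ℕ → ℝ × ℝ) :=
  {d | (∀ i, d i ∈ OmegaR) ∧
    ∀ n : ℕ, (∑' i : ℕ, (β ^ (i + 1))⁻¹ • d (n + i)) ∉ Ofat β}

/-- `d` has smallest period `k`. -/
def SmallestPeriod {α : Type*} (d : ℕ → α) (k : ℕ) : Prop :=
  0 < k ∧ (∀ i, d (i + k) = d i) ∧ ∀ j, 0 < j → j < k → ∃ i, d (i + j) ≠ d i

/-- The critical base `β_k`. -/
def betaK (k : ℕ) : ℝ :=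
  sInf {β : ℝ | β ∈ Set.Ioc (1 : ℝ) 2 ∧ ∃ d ∈ Ufat β, SmallestPeriod d k}

/-- Strict lexicographic order on sequences. -/
def seqLT {α : Type*} [Preorder α] (a b : ℕ → α) : Prop :=
  ∃ n, (∀ i < n, a i = b i) ∧ a n < b n

/-- Weak lexicographic order on sequences. -/
def seqLE {α : Type*} [Preorder α] (a b : ℕ → α) : Prop :=
  seqLT a b ∨ a = b

/-- `a` is a 0-1 sequence. -/
def IsBinary (a : ℕ → ℕ) : Prop := ∀ i, a i ≤ 1

/-- `a` does not end with `0^∞`. -/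
def NotEndInZeros (a : ℕ → ℕ) : Prop := ∀ N, ∃ i, N ≤ i ∧ a i ≠ 0

/-- `∑_{i=1}^∞ a_i β^{-i} = 1` (0-indexed: `a i` is a_{i+1}). -/
def SumsToOne (β : ℝ) (a : ℕ → ℕ) : Prop :=
  ∑' i : ℕ, (a i : ℝ) / β ^ (i + 1) = 1

/-- `a` is the quasi-greedy β-expansion of 1: the lexicographically largest
binary sequence not ending in `0^∞` whose value in base β is 1. -/
def IsQuasiGreedy (β : ℝ) (a : ℕ → ℕ) : Prop :=
  IsBinary a ∧ NotEndInZeros a ∧ SumsToOne β a ∧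
    ∀ b : ℕ → ℕ, IsBinary b → NotEndInZeros b → SumsToOne β b → seqLE b a

/-- `w⁺`: replace the final digit 0 of a block by 1. -/
def plusBlock (w : List ℕ) : List ℕ := w.dropLast ++ [1]

/-- `Θ` flips the outer digits of every consecutive triple
(000↦101, 001↦100, 100↦001, 101↦000). -/
def thetaBlock (w : List ℕ) : List ℕ :=
  w.mapIdx fun i x => if i % 3 = 1 then x else 1 - x

/-- `tB n` is the block `t_{n+1}`: `t_1 = 100`, `t_{n+1} = t_n⁺ Θ(t_n⁺)`. -/
def tB : ℕ → List ℕ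
  | 0 => [1, 0, 0]
  | n + 1 => plusBlock (tB n) ++ thetaBlock (plusBlock (tB n))

/-- The sequence `u w^∞` (the block `u` followed by `w` repeated forever). -/
def prefixPeriodic (u w : List ℕ) : ℕ → ℕ := fun i =>
  if i < u.length then u.getD i 0 else w.getD ((i - u.length) % w.length) 0

/-- The periodic sequence `w^∞`. -/
def periodicSeq (w : List ℕ) : ℕ → ℕ := fun i => w.getD (i % w.length) 0

/-- The componentwise limit `λ = 101001000101…` of the blocks `t_n`
(the digit `λ_{i+1}` has stabilized in `t_{i+2} = tB (i+1)`). -/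
def lamSeq : ℕ → ℕ := fun i => (tB (i + 1)).getD i 0

/-- `β_c` is the unique base in (1,2] with `∑ λ_i β^{-i} = 1`. -/
def IsBetaC (β : ℝ) : Prop := β ∈ Set.Ioc (1 : ℝ) 2 ∧ SumsToOne β lamSeq

/-- The sequence `t_{n+2}⁺ (Θ(t_{n+2}))^∞`, the quasi-greedy expansion of 1 for `β̂_n`. -/
def hatSeq (n : ℕ) : ℕ → ℕ :=
  prefixPeriodic (plusBlock (tB (n + 1))) (thetaBlock (tB (n + 1)))

/-- The Sharkovskii ordering `k ⊳ ℓ` on positive integers. -/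
def Sharkovskii (k l : ℕ) : Prop :=
  ∃ a b c d : ℕ, k = 2 ^ a * (2 * b + 1) ∧ l = 2 ^ c * (2 * d + 1) ∧ k ≠ l ∧
    ((1 ≤ b ∧ d = 0) ∨ (1 ≤ b ∧ 1 ≤ d ∧ (a < c ∨ (a = c ∧ b < d))) ∨
      (b = 0 ∧ d = 0 ∧ c < a))

/-- The digit set Ω as pairs of naturals (for combinatorial statements). -/
def OmegaD : Set (ℕ × ℕ) := {(0, 0), (1, 0), (0, 1)}

/-- The periodic extension `(d_1 … d_k)^∞` of a block. -/
def cyc (d : List (ℕ × ℕ)) : ℕ → ℕ × ℕ := fun i => d.getD (i % d.length) (0, 0)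

/-- Strict lexicographic order on lists. -/
def listLT (u v : List ℕ) : Prop := List.Lex (· < ·) u v

/-- Weak lexicographic order on lists. -/
def listLE (u v : List ℕ) : Prop := listLT u v ∨ u = v

/-- The first components `d_1¹ … d_k¹` of a block over Ω. -/
def comp1 (d : List (ℕ × ℕ)) : List ℕ := d.map Prod.fst

/-- The second components `d_1² … d_k²` of a block over Ω. -/
def comp2 (d : List (ℕ × ℕ)) : List ℕ := d.map Prod.snd

/-- The digits `(1 - d_1⁺) … (1 - d_k⁺)` where `d⁺ = d¹ + d²`. -/
def comp3 (d : List (ℕ × ℕ)) : List ℕ := d.map fun x => 1 - x.1 - x.2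

/-- Cyclic shift of a list by `j`. -/
def rot {α : Type*} (j : ℕ) (l : List α) : List α := l.drop j ++ l.take j

/-- `d` is a representation of the binary block `a`. -/
def IsRepresentation (a : List ℕ) (d : List (ℕ × ℕ)) : Prop :=
  d.length = a.length ∧ (∀ x ∈ d, x ∈ OmegaD) ∧
  SmallestPeriod (cyc d) a.length ∧
  comp1 d = a ∧ listLE (comp3 d) (comp2 d) ∧ listLE (comp2 d) a ∧
  ∀ j < a.length,
    listLE (comp1 (rot j d)) a ∧ listLE (comp2 (rot j d)) a ∧ listLE (comp3 (rot j d)) a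

/-- A binary block is admissible if it has a representation. -/
def IsAdmissible (a : List ℕ) : Prop := ∃ d, IsRepresentation a d

/-- The `i`-th consecutive triple of a block (0-indexed). -/
def tripleAt (a : List ℕ) (i : ℕ) : List ℕ :=
  [a.getD (3 * i) 0, a.getD (3 * i + 1) 0, a.getD (3 * i + 2) 0]

/-- The edges of the directed graph on {000, 001, 100, 101} defining the subshift `X`. -/
def XEdge (u v : List ℕ) : Prop :=
  (u, v) ∈ ({([1,0,1], [0,0,1]), ([1,0,1], [0,0,0]), ([0,0,1], [0,0,0]),
             ([0,0,0], [1,0,1]), ([0,0,0], [1,0,0]), ([1,0,0], [1,0,1])} :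
      Set (List ℕ × List ℕ))



/-! ### Smallest periods -/

lemma SmallestPeriod.mul {α : Type*} {d : ℕ → α} {k : ℕ} (h : SmallestPeriod d k) (c i : ℕ) :
    d (i + c * k) = d i := by
  induction c with
  | zero => simp
  | succ c ih => rw [add_mul, one_mul, ← add_assoc, h.2.1, ih]

lemma SmallestPeriod.shift {α : Type*} {d : ℕ → α} {k : ℕ} (h : SmallestPeriod d k) (c : ℕ) :
    SmallestPeriod (fun i => d (c + i)) k := by
  refine ⟨h.1, fun i => ?_, fun j hj hjk => ?_⟩
  · show d (c + (i + k)) = d (c + i)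
    rw [← add_assoc, h.2.1]
  · obtain ⟨i, hi⟩ := h.2.2 j hj hjk
    by_contra hcon
    push Not at hcon
    apply hi
    have hk := h.1
    have hck : c ≤ i + c * k := by nlinarith
    have h1 := hcon (i + c * k - c)
    have e1 : c + (i + c * k - c + j) = (i + j) + c * k := by omega
    have e2 : c + (i + c * k - c) = i + c * k := by omega
    simp only [e1, e2] at h1
    rwa [h.mul, h.mul] at h1

lemma SmallestPeriod.le {α : Type*} {d : ℕ → α} {k p : ℕ} (h : SmallestPeriod d k) (hp : 0 < p)
    (hd : ∀ i, d (i + p) = d i) : k ≤ p := by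
  by_contra hlt
  obtain ⟨i, hi⟩ := h.2.2 p hp (by omega)
  exact hi (hd i)

/-! ### The Thue-Morse sequence -/

/-- The Thue-Morse sequence `0110 1001 …`. -/
def tm (n : ℕ) : Bool := if h : n = 0 then false else xor (tm (n / 2)) (decide (n % 2 = 1))
termination_by n
decreasing_by omega

lemma tm_zero : tm 0 = false := by rw [tm]; simp

lemma tm_even (n : ℕ) : tm (2 * n) = tm n := by
  rcases Nat.eq_zero_or_pos n with h | h
  · subst h; rfl
  · rw [tm]
    have h1 : 2 * n / 2 = n := by omega
    have h2 : 2 * n % 2 = 0 := by omega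
    have h3 : n ≠ 0 := by omega
    simp [h1, h2, h3]

lemma tm_odd (n : ℕ) : tm (2 * n + 1) = !tm n := by
  rw [tm]
  have h1 : (2 * n + 1) / 2 = n := by omega
  have h2 : (2 * n + 1) % 2 = 1 := by omega
  simp [h1, h2]

lemma tm_one : tm 1 = true := by have := tm_odd 0; simpa [tm_zero] using this
lemma tm_two : tm 2 = true := by have := tm_even 1; simpa [tm_one] using this
lemma tm_three : tm 3 = false := by have := tm_odd 1; simpa [tm_one] using this
lemma tm_four : tm 4 = true := by have := tm_even 2; simpa [tm_two] using this
lemma tm_five : tm 5 = false := by have := tm_odd 2; simpa [tm_two] using this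
lemma tm_six : tm 6 = false := by have := tm_even 3; simpa [tm_three] using this

lemma tm_pow_add (n : ℕ) : ∀ j < 2 ^ n, tm (2 ^ n + j) = !tm j := by
  induction n with
  | zero =>
    intro j hj
    have : j = 0 := by simpa using hj
    subst this
    simp [tm_zero, tm_one]
  | succ n ih =>
    intro j hj
    rw [pow_succ] at hj ⊢
    have hj2 := ih (j / 2) (by omega)
    rcases Nat.even_or_odd' j with ⟨c, hc | hc⟩
    · have e : 2 ^ n * 2 + j = 2 * (2 ^ n + c) := by omega
      have e2 : j / 2 = c := by omega
      rw [e, tm_even, hc, tm_even, ← e2, hj2]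
    · have e : 2 ^ n * 2 + j = 2 * (2 ^ n + c) + 1 := by omega
      have e2 : j / 2 = c := by omega
      rw [e2] at hj2
      rw [e, tm_odd, hc, tm_odd, hj2]

/-- The Komornik-Loreti condition. -/
def KL (x : ℕ → Bool) : Prop := ∀ i n, (∀ j < n, xor (x (i + j)) (x i) = tm j) →
  xor (x (i + n)) (x i) = true → tm n = true

lemma tm_KL : KL tm := by
  intro i n
  induction n using Nat.strong_induction_on generalizing i with
  | _ n ih =>
    intro hag hn
    rcases Nat.eq_zero_or_pos n with h0 | hpos
    · subst h0; simp at hn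
    rcases Nat.even_or_odd' i with ⟨a, ha | ha⟩
    · have hstep : ∀ j, xor (tm (i + 2 * j)) (tm i) = xor (tm (a + j)) (tm a) := by
        intro j
        rw [ha, ← mul_add, tm_even, tm_even]
      have hstep' : ∀ j, xor (tm (i + (2 * j + 1))) (tm i) = !xor (tm (a + j)) (tm a) := by
        intro j
        rw [ha, ← add_assoc, ← mul_add, tm_odd, tm_even]
        simp
      rcases Nat.even_or_odd' n with ⟨b, hb | hb⟩
      · have := ih b (by omega) a (fun j hj => by
          rw [← hstep, hag (2 * j) (by omega), tm_even]) (by rw [← hstep, ← hb, hn])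
        rw [hb, tm_even, this]
      · have h1 := hag (2 * b) (by omega)
        rw [hstep, tm_even] at h1
        rw [hb, hstep', h1] at hn
        rw [hb, tm_odd, hn]
    · have h1 : tm (i + 1) = tm (a + 1) := by
        rw [← tm_even (a + 1)]; congr 1; omega
      have h2 : tm (i + 2) = !tm (a + 1) := by
        rw [← tm_odd (a + 1)]; congr 1; omega
      by_cases hn1 : n = 1
      · rw [hn1, tm_one]
      by_cases hn2 : n = 2
      · rw [hn2, tm_two]
      have g1 := hag 1 (by omega)
      have g2 := hag 2 (by omega)
      rw [h1, tm_one] at g1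
      rw [h2, tm_two] at g2
      revert g1 g2
      cases tm (a + 1) <;> cases tm i <;> simp

lemma KL.shift {x : ℕ → Bool} (h : KL x) (c : ℕ) : KL (fun i => x (c + i)) := by
  intro i n hag hn
  refine h (c + i) n (fun j hj => ?_) ?_
  · have := hag j hj
    simpa [add_assoc] using this
  · simpa [add_assoc] using hn

lemma KL_period_aux (m : ℕ) : ∀ x : ℕ → Bool, KL x → SmallestPeriod x m →
    ∃ n, m = 2 ^ n := by
  induction m using Nat.strong_induction_on with
  | _ m ih =>
    intro x0 hK0 hP0
    by_cases hm1 : m = 1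
    · exact ⟨0, by simpa using hm1⟩
    have hmpos := hP0.1
    obtain ⟨i0, hi0⟩ := hP0.2.2 1 one_pos (by omega)
    obtain ⟨x, hx⟩ : ∃ x : ℕ → Bool, x = fun i => x0 (i0 + i) := ⟨_, rfl⟩
    have hK : KL x := by rw [hx]; exact hK0.shift i0
    have hP : SmallestPeriod x m := by rw [hx]; exact hP0.shift i0
    have h01 : x 1 ≠ x 0 := by rw [hx]; exact hi0
    clear hx hi0 hK0 hP0
    have htri0 : ∀ j, x j ≠ x (j + 1) → x (j + 1) = x (j + 2) → x (j + 3) ≠ x (j + 1) := by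
      intro j h1 h2 h3
      have := hK j 3 (fun l hl => by
        interval_cases l
        · simp [tm_zero]
        · rw [tm_one]; revert h1; cases x j <;> cases x (j + 1) <;> simp
        · rw [tm_two, ← h2]; revert h1; cases x j <;> cases x (j + 1) <;> simp)
        (by rw [h3]; revert h1; cases x j <;> cases x (j + 1) <;> simp)
      rw [tm_three] at this
      exact absurd this (by simp)
    have htri : ∀ j, ¬ (x j = x (j + 1) ∧ x (j + 1) = x (j + 2)) := by
      intro j
      induction j with
      | zero => intro h; exact h01 h.1.symm
      | succ j ihj =>
        intro h
        have h1 : x j ≠ x (j + 1) := fun hh => ihj ⟨hh, h.1⟩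
        exact htri0 j h1 h.1 (h.2.symm.trans h.1.symm)
    have hD : ∀ i, x i = x (i + 1) → x (i + 1) ≠ x (i + 2) ∧ x (i + 3) ≠ x (i + 4) ∧
        (x (i + 2) = x (i + 3) ∨ x (i + 4) = x (i + 5)) := by
      intro i hi
      have hi1 : i ≠ 0 := by rintro rfl; exact h01 hi.symm
      obtain ⟨j, rfl⟩ : ∃ j, i = j + 1 := ⟨i - 1, by omega⟩
      have t0 := htri j
      have t1 := htri (j + 1)
      have t2 := htri (j + 2)
      have t3 := htri (j + 3)
      have k5 := hK j 5
      have k6 := hK j 6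
      rw [tm_five] at k5
      rw [tm_six] at k6
      simp only [Nat.forall_lt_succ_right, not_lt_zero, IsEmpty.forall_iff, implies_true, tm_zero,
        tm_one, tm_two, tm_three, tm_four, tm_five, true_and, add_zero, Bool.xor_self] at k5 k6
      simp only [add_assoc, Nat.reduceAdd] at *
      generalize x j = y0 at *
      generalize x (j + 1) = y1 at *
      generalize x (j + 2) = y2 at *
      generalize x (j + 3) = y3 at *
      generalize x (j + 4) = y4 at *
      generalize x (j + 5) = y5 at *
      generalize x (j + 6) = y6 at *
      clear hP hK h01 htri htri0 ih
      revert hi t0 t1 t2 t3 k5 k6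
      cases y0 <;> cases y1 <;> cases y2 <;> cases y3 <;> cases y4 <;> cases y5 <;> simp
    have hE : ∀ j i, x i = x (i + 1) → x (i + 2 * j + 1) ≠ x (i + 2 * j + 2) := by
      intro j
      induction j using Nat.strong_induction_on with
      | _ j ihj =>
        intro i hi
        obtain ⟨a1, a2, a3⟩ := hD i hi
        by_cases hj0 : j = 0
        · subst hj0; exact a1
        by_cases hj1 : j = 1
        · subst hj1; exact a2
        rcases a3 with h | h
        · have := ihj (j - 1) (by omega) (i + 2) h
          have e : i + 2 + 2 * (j - 1) = i + 2 * j := by omega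
          rwa [e] at this
        · have := ihj (j - 2) (by omega) (i + 4) h
          have e : i + 4 + 2 * (j - 2) = i + 2 * j := by omega
          rwa [e] at this
    by_cases hex : ∃ i, x i = x (i + 1)
    · obtain ⟨i, hi⟩ := hex
      have hi' : x (i + m) = x (i + m + 1) := by
        rw [hP.2.1, show i + m + 1 = (i + 1) + m by ring, hP.2.1, hi]
      rcases Nat.even_or_odd' m with ⟨q, hq | hq⟩
      · have hz : ∀ j, x (i + 1 + (2 * j + 1)) = !x (i + 1 + 2 * j) := by
          intro j
          have := hE j i hi
          rw [show i + 1 + (2 * j + 1) = i + 2 * j + 2 by ring,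
            show i + 1 + 2 * j = i + 2 * j + 1 by ring]
          revert this
          cases x (i + 2 * j + 1) <;> cases x (i + 2 * j + 2) <;> simp
        have hPz := hP.shift (i + 1)
        have hKz := hK.shift (i + 1)
        have hA : KL (fun j => x (i + 1 + 2 * j)) := by
          intro a n hag hn
          have := hKz (2 * a) (2 * n) (fun l hl => ?_) (by
            rw [← mul_add]; exact hn)
          · rwa [tm_even] at this
          · rcases Nat.even_or_odd' l with ⟨b, hb | hb⟩
            · have := hag b (by omega)
              rw [hb, tm_even, ← this, ← mul_add]
            · have := hag b (by omega)
              simp only [] at this ⊢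
              rw [hb, tm_odd, ← this, ← add_assoc (2 * a), ← mul_add, hz, Bool.not_xor]
        have hB : SmallestPeriod (fun j => x (i + 1 + 2 * j)) q := by
          refine ⟨by omega, fun l => ?_, fun l hl hlq => ?_⟩
          · have := hPz.2.1 (2 * l)
            simp only [] at this ⊢
            rw [← this, hq]
            congr 1; ring
          · by_contra hcon
            push Not at hcon
            have := hPz.le (p := 2 * l) (by omega) (fun r => ?_)
            · omega
            · skip
              rcases Nat.even_or_odd' r with ⟨b, hb | hb⟩
              · rw [hb, ← mul_add, hcon]
              · rw [hb, show 2 * b + 1 + 2 * l = 2 * (b + l) + 1 by ring, hz, hz, hcon]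
        obtain ⟨n, hn⟩ := ih q (by omega) _ hA hB
        exact ⟨n + 1, by rw [pow_succ, ← hn]; omega⟩
      · exfalso
        have := hE q i hi
        apply this
        have e : i + 2 * q + 1 = i + m := by omega
        have e2 : i + 2 * q + 2 = i + m + 1 := by omega
        rw [e, e2, hi']
    · push Not at hex
      have := hP.le (p := 2) (by omega) (fun i => by
        have h1 := hex i
        have h2 := hex (i + 1)
        rw [show i + 1 + 1 = i + 2 by ring] at h2
        revert h1 h2
        cases x i <;> cases x (i + 1) <;> cases x (i + 2) <;> simp)
      exact ⟨1, by omega⟩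

/-- The sequence `λ` written via Thue-Morse. -/
def lamB (i : ℕ) : Bool :=
  if i % 3 = 0 then !tm (i / 3) else if i % 3 = 1 then false else tm (i / 3 + 1)

lemma lamB0 (j : ℕ) : lamB (3 * j) = !tm j := by
  have h1 : 3 * j % 3 = 0 := by omega
  have h2 : 3 * j / 3 = j := by omega
  simp [lamB, h1, h2]

lemma lamB1 (j : ℕ) : lamB (3 * j + 1) = false := by
  have h1 : (3 * j + 1) % 3 = 1 := by omega
  simp [lamB, h1]

lemma lamB2 (j : ℕ) : lamB (3 * j + 2) = tm (j + 1) := by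
  have h1 : (3 * j + 2) % 3 = 2 := by omega
  have h2 : (3 * j + 2) / 3 = j := by omega
  simp [lamB, h1, h2]

lemma w_third : ∀ a b c d : Fin 3, a ≠ b → b ≠ c → c ≠ d → a ≠ c → b ≠ d → d = a := by
  intro a b c d; omega

lemma comb_main (w : ℕ → Fin 3) (k : ℕ) (hk : 2 ≤ k) (hP : SmallestPeriod w k)
    (H : ∀ l n, w n ≠ l → ∀ m, (∀ j < m, decide (w (n + 1 + j) = l) = lamB j) →
      w (n + 1 + m) = l → lamB m = true) : ∃ n, k = 3 * 2 ^ n := by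
  obtain ⟨n0, hn0⟩ := hP.2.2 1 one_pos (by omega)
  have l0 : lamB 0 = true := by have := lamB0 0; simpa [tm_zero] using this
  have l1 : lamB 1 = false := lamB1 0
  have l2 : lamB 2 = true := by have := lamB2 0; simpa [tm_one] using this
  have l3 : lamB 3 = false := by have := lamB0 1; simpa [tm_one] using this
  have l4 : lamB 4 = false := lamB1 1
  have l5 : lamB 5 = true := by have := lamB2 1; simpa [tm_two] using this
  have l6 : lamB 6 = false := by have := lamB0 2; simpa [tm_two] using this
  have l7 : lamB 7 = false := lamB1 2
  have l8 : lamB 8 = false := by have := lamB2 2; simpa [tm_three] using this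
  have hne0 : ∀ j, w (n0 + j) ≠ w (n0 + j + 1) := by
    intro j
    induction j with
    | zero => exact fun h => hn0 h.symm
    | succ j ih =>
      intro h
      have := H (w (n0 + j + 1)) (n0 + j) ih 1 (fun l hl => by
        interval_cases l
        simp [l0]) h.symm
      rw [l1] at this
      exact absurd this (by simp)
  have hne : ∀ j, w j ≠ w (j + 1) := by
    intro j h
    have hpos := hP.1
    have hle : n0 ≤ j + n0 * k := by nlinarith
    apply hne0 (j + n0 * k - n0)
    have e1 : n0 + (j + n0 * k - n0) = j + n0 * k := by omega
    rw [e1, show j + n0 * k + 1 = (j + 1) + n0 * k by ring, hP.mul, hP.mul, h]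
  have H' : ∀ n m, (∀ j < m, decide (w (n + j) = w n) = lamB j) → w (n + m) = w n →
      lamB m = true := by
    intro n m hag hm
    have hper : ∀ j, w (n + k - 1 + 1 + j) = w (n + j) := by
      intro j
      rw [show n + k - 1 + 1 + j = (n + j) + k by omega, hP.2.1]
    refine H (w n) (n + k - 1) ?_ m (fun j hj => ?_) ?_
    · have := hne (n + k - 1)
      have h2 := hper 0
      simp only [add_zero] at h2
      rwa [h2] at this
    · rw [hper]; exact hag j hj
    · rw [hper]; exact hm
  have hE : ∀ n, w n = w (n + 2) → (w (n + 2) ≠ w (n + 4)) ∧ (w (n + 3) = w (n + 5) ∨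
      (w (n + 5) ≠ w (n + 7) ∧ w (n + 6) = w (n + 8))) := by
    intro n hn
    have f1 : w (n + 4) ≠ w n := by
      intro h4
      have := H' n 4 (fun j hj => by
        interval_cases j
        · simp [l0]
        · simpa [l1] using (hne n).symm
        · simp [l2, hn]
        · rw [l3, hn]; simpa using (hne (n + 2)).symm) h4
      rw [l4] at this
      exact absurd this (by simp)
    refine ⟨by rw [← hn]; exact f1.symm, ?_⟩
    by_cases h3 : w (n + 3) = w (n + 5)
    · exact Or.inl h3
    right
    have h5 : w (n + 5) = w (n + 2) :=
      w_third _ _ _ _ (hne (n + 2)) (hne (n + 3)) (hne (n + 4)) (by rw [← hn]; exact f1.symm) h3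
    rw [← hn] at h5
    have hag : ∀ j < 7, decide (w (n + j) = w n) = lamB j := by
      intro j hj
      interval_cases j
      · simp [l0]
      · simpa [l1] using (hne n).symm
      · simp [l2, hn]
      · rw [l3, hn]; simpa using (hne (n + 2)).symm
      · simpa [l4] using f1
      · simp [l5, h5]
      · rw [l6, ← h5]; simpa using (hne (n + 5)).symm
    have h7 : w (n + 7) ≠ w n := by
      intro h
      have := H' n 7 hag h
      rw [l7] at this
      exact absurd this (by simp)
    refine ⟨by rw [h5]; exact h7.symm, ?_⟩
    by_contra h6
    have h8 : w (n + 8) = w (n + 5) :=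
      w_third _ _ _ _ (hne (n + 5)) (hne (n + 6)) (hne (n + 7)) (by rw [h5]; exact h7.symm) h6
    have := H' n 8 (fun j hj => by
      rcases Nat.lt_succ_iff_lt_or_eq.mp hj with h | h
      · exact hag j h
      · subst h; simpa [l7] using h7) (by rw [h8, h5])
    rw [l8] at this
    exact absurd this (by simp)
  have hE2 : ∀ n, w n = w (n + 2) → w (n + 1) ≠ w (n + 3) := by
    intro n hn h1
    obtain ⟨a1, a2⟩ := hE n hn
    obtain ⟨b1, b2⟩ := hE (n + 1) h1
    simp only [add_assoc, Nat.reduceAdd] at *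
    rcases a2 with h | ⟨h, h'⟩
    · exact b1 h
    · rcases b2 with g | ⟨g, g'⟩
      · obtain ⟨c1, c2⟩ := hE (n + 4) g
        simp only [add_assoc, Nat.reduceAdd] at *
        exact c1 h'
      · exact g h'
  have hE3 : ∀ n, w n = w (n + 2) → w (n + 4) ≠ w (n + 6) := by
    intro n hn h4
    obtain ⟨a1, a2⟩ := hE n hn
    obtain ⟨b1, b2⟩ := hE (n + 4) h4
    simp only [add_assoc, Nat.reduceAdd] at *
    rcases a2 with h | ⟨h, h'⟩
    · exact hE2 (n + 3) h h4
    · exact b1 h'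
  have hE5 : ∀ n, w n = w (n + 2) → w (n + 5) ≠ w (n + 7) := by
    intro n hn
    obtain ⟨a1, a2⟩ := hE n hn
    rcases a2 with h | ⟨h, h'⟩
    · exact (hE (n + 3) h).1
    · exact h
  have hF : ∀ j n, w n = w (n + 2) → w (n + 3 * j + 1) ≠ w (n + 3 * j + 3) ∧
      w (n + 3 * j + 2) ≠ w (n + 3 * j + 4) := by
    intro j
    induction j using Nat.strong_induction_on with
    | _ j ih =>
      intro n hn
      by_cases hj0 : j = 0
      · subst hj0; exact ⟨hE2 n hn, (hE n hn).1⟩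
      by_cases hj1 : j = 1
      · subst hj1; exact ⟨hE3 n hn, hE5 n hn⟩
      rcases (hE n hn).2 with h | ⟨_, h⟩
      · have := ih (j - 1) (by omega) (n + 3) h
        have e : n + 3 + 3 * (j - 1) = n + 3 * j := by omega
        rwa [e] at this
      · have := ih (j - 2) (by omega) (n + 6) h
        have e : n + 6 + 3 * (j - 2) = n + 3 * j := by omega
        rwa [e] at this
  by_cases hex : ∃ n, w n = w (n + 2)
  · obtain ⟨n1, hn1⟩ := hex
    obtain ⟨v, hv⟩ : ∃ v : ℕ → Fin 3, v = fun i => w (n1 + 1 + i) := ⟨_, rfl⟩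
    have hPv : SmallestPeriod v k := by rw [hv]; exact hP.shift _
    have hnev : ∀ j, v j ≠ v (j + 1) := by intro j; rw [hv]; exact hne (n1 + 1 + j)
    have hF1 : ∀ j, v (3 * j) ≠ v (3 * j + 2) := by
      intro j
      have := (hF j n1 hn1).1
      rw [hv]
      rwa [show n1 + 3 * j + 1 = n1 + 1 + 3 * j by ring,
        show n1 + 3 * j + 3 = n1 + 1 + (3 * j + 2) by ring] at this
    have hF2 : ∀ j, v (3 * j + 1) ≠ v (3 * j + 3) := by
      intro j
      have := (hF j n1 hn1).2
      rw [hv]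
      rwa [show n1 + 3 * j + 2 = n1 + 1 + (3 * j + 1) by ring,
        show n1 + 3 * j + 4 = n1 + 1 + (3 * j + 3) by ring] at this
    have Hv : ∀ n m, (∀ j < m, decide (v (n + j) = v n) = lamB j) → v (n + m) = v n →
        lamB m = true := by
      intro n m hag hm
      rw [hv] at hag hm
      refine H' (n1 + 1 + n) m (fun j hj => ?_) ?_
      · rw [add_assoc (n1 + 1)]; exact hag j hj
      · rw [add_assoc (n1 + 1)]; exact hm
    clear hF hE5 hE3 hE2 hE H' hne hne0 H hP hv hn0 hn1
    have hc : ∀ j, v (3 * j) = v 0 := by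
      intro j
      induction j with
      | zero => rfl
      | succ j ih =>
        rw [← ih]
        exact w_third _ _ _ _ (hnev (3 * j)) (hnev (3 * j + 1)) (hnev (3 * j + 2)) (hF1 j) (hF2 j)
    have hc1 : ∀ j, v (3 * j + 1) ≠ v 0 := fun j => by rw [← hc j]; exact (hnev _).symm
    have hc2 : ∀ j, v (3 * j + 2) ≠ v 0 := fun j => by rw [← hc j]; exact (hF1 j).symm
    have hc12 : ∀ j, v (3 * j + 1) ≠ v (3 * j + 2) := fun j => hnev _
    have h3k : ∃ q, k = 3 * q := by
      have h0 : v k = v 0 := by have := hPv.2.1 0; simpa using this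
      have : k % 3 = 0 ∨ k % 3 = 1 ∨ k % 3 = 2 := by omega
      rcases this with h | h | h
      · exact ⟨k / 3, by omega⟩
      · exfalso
        rw [show k = 3 * (k / 3) + 1 by omega] at h0
        exact hc1 _ h0
      · exfalso
        rw [show k = 3 * (k / 3) + 2 by omega] at h0
        exact hc2 _ h0
    obtain ⟨q, hq⟩ := h3k
    obtain ⟨x, hx⟩ : ∃ x : ℕ → Bool, x = fun j => decide (v (3 * j + 1) = v 1) := ⟨_, rfl⟩
    have hx' : ∀ j, x j = decide (v (3 * j + 1) = v 1) := fun j => by rw [hx]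
    have hfin1 : ∀ b p q r : Fin 3, p ≠ b → q ≠ b → r ≠ b → 
        (decide (p = r) = decide (q = r) ↔ p = q) := by decide
    have hfin2 : ∀ b p q p' q' : Fin 3, p ≠ b → q ≠ b → p' ≠ b → q' ≠ b → p ≠ p' → q ≠ q' →
        (p' = q' ↔ p = q) ∧ (p ≠ q → p = q') ∧ (p = q' → p ≠ q) := by decide
    have hxe : ∀ i j, x i = x j ↔ v (3 * i + 1) = v (3 * j + 1) := by
      intro i j
      rw [hx', hx']
      exact hfin1 (v 0) _ _ _ (hc1 i) (hc1 j) (hc1 0)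
    have hs0 : ∀ i j, decide (v (3 * i + 2 + 3 * j) = v (3 * i + 2)) =
        !(xor (x (i + j)) (x i)) := by
      intro i j
      rw [show 3 * i + 2 + 3 * j = 3 * (i + j) + 2 by ring]
      have h1 := (hfin2 (v 0) (v (3 * (i + j) + 1)) (v (3 * i + 1)) (v (3 * (i + j) + 2))
        (v (3 * i + 2)) (hc1 _) (hc1 _) (hc2 _) (hc2 _) (hc12 _) (hc12 _)).1
      have h2 := hxe (i + j) i
      rw [Bool.eq_iff_iff, decide_eq_true_iff, h1.trans h2.symm]
      cases x (i + j) <;> cases x i <;> simp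
    have hs1 : ∀ i j, decide (v (3 * i + 2 + (3 * j + 1)) = v (3 * i + 2)) = false := by
      intro i j
      rw [show 3 * i + 2 + (3 * j + 1) = 3 * (i + j + 1) by ring, hc]
      simpa using (hc2 i).symm
    have hs2 : ∀ i j, decide (v (3 * i + 2 + (3 * j + 2)) = v (3 * i + 2)) =
        xor (x (i + (j + 1))) (x i) := by
      intro i j
      rw [show 3 * i + 2 + (3 * j + 2) = 3 * (i + (j + 1)) + 1 by ring]
      obtain ⟨-, h1, h1'⟩ := hfin2 (v 0) (v (3 * (i + (j + 1)) + 1)) (v (3 * i + 1))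
        (v (3 * (i + (j + 1)) + 2))
        (v (3 * i + 2)) (hc1 _) (hc1 _) (hc2 _) (hc2 _) (hc12 _) (hc12 _)
      have h2 := hxe (i + (j + 1)) i
      have h3 : v (3 * (i + (j + 1)) + 1) = v (3 * i + 2) ↔ ¬ (x (i + (j + 1)) = x i) := by
        rw [h2]; exact ⟨h1', h1⟩
      rw [Bool.eq_iff_iff, decide_eq_true_iff, h3]
      cases x (i + (j + 1)) <;> cases x i <;> simp
    have hKx : KL x := by
      intro i n hag hn
      rcases Nat.eq_zero_or_pos n with h0 | hpos
      · subst h0; simp at hn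
      obtain ⟨n, rfl⟩ : ∃ n', n = n' + 1 := ⟨n - 1, by omega⟩
      have := Hv (3 * i + 2) (3 * n + 2) (fun m hm => ?_) ?_
      · rwa [lamB2] at this
      · have : m % 3 = 0 ∨ m % 3 = 1 ∨ m % 3 = 2 := by omega
        rcases this with h | h | h
        · rw [show m = 3 * (m / 3) by omega, hs0, lamB0, hag _ (by omega)]
        · rw [show m = 3 * (m / 3) + 1 by omega, hs1, lamB1]
        · rw [show m = 3 * (m / 3) + 2 by omega, hs2, lamB2, hag _ (by omega)]
      · have h := hs2 i n
        rw [hn] at h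
        simpa using h
    have hPx : SmallestPeriod x q := by
      refine ⟨by omega, fun j => ?_, fun p hp hpq => ?_⟩
      · rw [hxe, show 3 * (j + q) + 1 = 3 * j + 1 + k by omega, hPv.2.1]
      · by_contra hcon
        push Not at hcon
        have := hPv.le (p := 3 * p) (by omega) (fun r => ?_)
        · omega
        · have : r % 3 = 0 ∨ r % 3 = 1 ∨ r % 3 = 2 := by omega
          have e1 := (hxe (r / 3 + p) (r / 3)).mp (hcon _)
          rcases this with h | h | h
          · rw [show r + 3 * p = 3 * (r / 3 + p) by omega, hc]
            conv_rhs => rw [show r = 3 * (r / 3) by omega, hc]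
          · rw [show r + 3 * p = 3 * (r / 3 + p) + 1 by omega, e1]
            congr 1; omega
          · have h1 := (hfin2 (v 0) _ _ _ _ (hc1 (r / 3 + p)) (hc1 (r / 3)) (hc2 (r / 3 + p))
              (hc2 (r / 3)) (hc12 _) (hc12 _)).1.mpr e1
            rw [show r + 3 * p = 3 * (r / 3 + p) + 2 by omega, h1]
            congr 1; omega
    obtain ⟨n, hn⟩ := KL_period_aux q x hKx hPx
    exact ⟨n, by rw [hq, hn]⟩
  · push Not at hex
    have h3 : k ≤ 3 := hP.le (by omega) (fun i =>
      w_third _ _ _ _ (hne i) (hne (i + 1)) (hne (i + 2)) (hex i) (hex (i + 1)))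
    have h2 : k ≠ 2 := by
      rintro rfl
      exact hex 0 (hP.2.1 0).symm
    exact ⟨0, by omega⟩

/-! ### Values of digit sequences -/

/-- The value of a sequence of reals in base `β`. -/
def val (β : ℝ) (s : ℕ → ℝ) : ℝ := ∑' i : ℕ, s i / β ^ (i + 1)

/-- Sequences with values in the unit interval. -/
def UnitSeq (s : ℕ → ℝ) : Prop := ∀ i, 0 ≤ s i ∧ s i ≤ 1

lemma UnitSeq.shift {s : ℕ → ℝ} (h : UnitSeq s) (n : ℕ) : UnitSeq (fun i => s (n + i)) :=
  fun i => h (n + i)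

lemma hasSum_one {β : ℝ} (hβ : 1 < β) :
    HasSum (fun i : ℕ => 1 / β ^ (i + 1)) (1 / (β - 1)) := by
  have h0 : 0 < β := by linarith
  have h1 : HasSum (fun i : ℕ => (β⁻¹) ^ i) (1 - β⁻¹)⁻¹ :=
    hasSum_geometric_of_lt_one (by positivity) (inv_lt_one_of_one_lt₀ hβ)
  have h2 := h1.mul_left β⁻¹
  have hne : β - 1 ≠ 0 := by linarith
  have e : β⁻¹ * (1 - β⁻¹)⁻¹ = 1 / (β - 1) := by
    rw [← mul_inv, mul_sub, mul_one, mul_inv_cancel₀ h0.ne', one_div]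
  rw [e] at h2
  have e3 : (fun i : ℕ => 1 / β ^ (i + 1)) = fun i : ℕ => β⁻¹ * β⁻¹ ^ i := by
    funext i
    rw [← pow_succ', inv_pow, one_div]
  rw [e3]
  exact h2

lemma UnitSeq.summable {β : ℝ} (hβ : 1 < β) {s : ℕ → ℝ} (hs : UnitSeq s) :
    Summable (fun i : ℕ => s i / β ^ (i + 1)) := by
  have h0 : 0 < β := by linarith
  refine Summable.of_nonneg_of_le (fun i => ?_) (fun i => ?_) (hasSum_one hβ).summable
  · exact div_nonneg (hs i).1 (by positivity)
  · have := (hs i).2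
    gcongr

lemma val_nonneg {β : ℝ} (hβ : 1 < β) {s : ℕ → ℝ} (hs : UnitSeq s) : 0 ≤ val β s := by
  have h0 : 0 < β := by linarith
  exact tsum_nonneg fun i => div_nonneg (hs i).1 (by positivity)

lemma val_le {β : ℝ} (hβ : 1 < β) {s : ℕ → ℝ} (hs : UnitSeq s) : val β s ≤ 1 / (β - 1) := by
  have h0 : 0 < β := by linarith
  rw [← (hasSum_one hβ).tsum_eq]
  refine (hs.summable hβ).tsum_le_tsum (fun i => ?_) (hasSum_one hβ).summable
  have := (hs i).2
  gcongr

lemma val_split {β : ℝ} (hβ : 1 < β) {s : ℕ → ℝ} (hs : UnitSeq s) (m : ℕ) :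
    val β s = ∑ i ∈ Finset.range m, s i / β ^ (i + 1) + val β (fun i => s (m + i)) / β ^ m := by
  have h0 : 0 < β := by linarith
  rw [val, ← (hs.summable hβ).sum_add_tsum_nat_add m, val, ← tsum_div_const]
  congr 1
  congr 1
  funext i
  rw [div_div, ← pow_add, show i + 1 + m = i + m + 1 by ring, add_comm m i]

lemma val_step {β : ℝ} (hβ : 1 < β) {s : ℕ → ℝ} (hs : UnitSeq s) :
    β * val β s = s 0 + val β (fun i => s (1 + i)) := by
  have h0 : 0 < β := by linarith
  rw [val_split hβ hs 1]
  simp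
  field_simp

lemma val_first {β : ℝ} (hβ : 1 < β) {s : ℕ → ℝ} (hs : UnitSeq s) {m : ℕ} :
    val β s = ∑ i ∈ Finset.range m, s i / β ^ (i + 1) +
      (s m + val β (fun i => s (m + 1 + i))) / β ^ (m + 1) := by
  rw [val_split hβ hs (m + 1), Finset.sum_range_succ, add_div, add_assoc]

/-! ### The Parry type lemma -/

/-- `0/1` real value of a boolean. -/
def b2r (b : Bool) : ℝ := if b then 1 else 0

lemma b2r_unit (s : ℕ → Bool) : UnitSeq (fun i => b2r (s i)) := by
  intro i
  simp only [b2r]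
  split_ifs <;> norm_num

/-- Tails of `λ` are lexicographically at most `λ`. -/
lemma lamB_tail (i m : ℕ) (hag : ∀ j < m, lamB (i + j) = lamB j) (hm : lamB (i + m) = true) :
    lamB m = true := by
  have l0 : lamB 0 = true := by have := lamB0 0; simpa [tm_zero] using this
  have l2 : lamB 2 = true := by have := lamB2 0; simpa [tm_one] using this
  rcases Nat.eq_zero_or_pos m with h0 | hpos
  · subst h0; exact l0
  have g0 := hag 0 hpos
  rw [l0, add_zero] at g0
  have h3 : i % 3 = 0 ∨ i % 3 = 1 ∨ i % 3 = 2 := by omega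
  rcases h3 with h | h | h
  · obtain ⟨a, rfl⟩ : ∃ a, i = 3 * a := ⟨i / 3, by omega⟩
    have ha : tm a = false := by rw [lamB0] at g0; simpa using g0
    have hm3 : m % 3 = 0 ∨ m % 3 = 1 ∨ m % 3 = 2 := by omega
    rcases hm3 with h | h | h
    · obtain ⟨b, rfl⟩ : ∃ b, m = 3 * b + 3 := ⟨m / 3 - 1, by omega⟩
      have e := hag (3 * b + 2) (by omega)
      rw [show 3 * a + (3 * b + 2) = 3 * (a + b) + 2 by ring, lamB2, lamB2] at e
      rw [show 3 * a + (3 * b + 3) = 3 * (a + b + 1) by ring, lamB0, e] at hm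
      rw [show 3 * b + 3 = 3 * (b + 1) by ring, lamB0, hm]
    · obtain ⟨b, rfl⟩ : ∃ b, m = 3 * b + 1 := ⟨m / 3, by omega⟩
      rw [show 3 * a + (3 * b + 1) = 3 * (a + b) + 1 by ring, lamB1] at hm
      exact absurd hm (by simp)
    · obtain ⟨b, rfl⟩ : ∃ b, m = 3 * b + 2 := ⟨m / 3, by omega⟩
      rw [show 3 * a + (3 * b + 2) = 3 * (a + b) + 2 by ring, lamB2] at hm
      rw [lamB2]
      refine tm_KL a (b + 1) (fun j hj => ?_) ?_
      · have e := hag (3 * j) (by omega)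
        rw [← mul_add, lamB0, lamB0] at e
        rw [ha, Bool.xor_false]
        simpa using e
      · rw [ha, Bool.xor_false, ← add_assoc, hm]
  · rw [show i = 3 * (i / 3) + 1 by omega, lamB1] at g0
    exact absurd g0 (by simp)
  · obtain ⟨a, rfl⟩ : ∃ a, i = 3 * a + 2 := ⟨i / 3, by omega⟩
    rw [lamB2] at g0
    by_cases h1 : m = 1
    · subst h1
      rw [show 3 * a + 2 + 1 = 3 * (a + 1) by ring, lamB0, g0] at hm
      exact absurd hm (by simp)
    by_cases h2 : m = 2
    · subst h2; exact l2
    have e := hag 2 (by omega)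
    rw [l2, show 3 * a + 2 + 2 = 3 * (a + 1) + 1 by ring, lamB1] at e
    exact absurd e (by simp)

lemma lam_tail_val {β : ℝ} (hβ : 1 < β) (h1 : val β (fun i => b2r (lamB i)) = 1) (n : ℕ) :
    val β (fun i => b2r (lamB (n + i))) ≤ 1 := by
  have h0 : 0 < β := by linarith
  have hC : 0 < 1 / (β - 1) := by
    have : 0 < β - 1 := by linarith
    positivity
  have hu := b2r_unit lamB
  have key : ∀ N : ℕ, ∀ n, val β (fun i => b2r (lamB (n + i))) ≤ 1 + 1 / (β - 1) / β ^ N := by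
    intro N
    induction N with
    | zero =>
      intro n
      have := val_le hβ (hu.shift n)
      simp only [pow_zero, div_one]
      linarith
    | succ N ih =>
      intro n
      by_cases hall : ∀ i, lamB (n + i) = lamB i
      · simp only [hall, h1]
        have : 0 ≤ 1 / (β - 1) / β ^ (N + 1) := by positivity
        linarith
      push Not at hall
      classical
      obtain ⟨m, hm, hmin⟩ : ∃ m, lamB (n + m) ≠ lamB m ∧ ∀ j < m, lamB (n + j) = lamB j :=
        ⟨Nat.find hall, Nat.find_spec hall, fun j hj => not_not.mp (Nat.find_min hall hj)⟩
      have hnm : lamB (n + m) = false := by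
        by_contra hc
        have hc' : lamB (n + m) = true := by simpa using hc
        exact hm (hc'.trans (lamB_tail n m hmin hc').symm)
      have hmm : lamB m = true := by
        rw [hnm] at hm
        revert hm
        cases lamB m <;> simp
      have e1 := val_first hβ (hu.shift n) (m := m)
      have e2 := val_first hβ hu (m := m)
      have e3 : ∑ i ∈ Finset.range m, b2r (lamB (n + i)) / β ^ (i + 1) =
          ∑ i ∈ Finset.range m, b2r (lamB i) / β ^ (i + 1) :=
        Finset.sum_congr rfl fun j hj => by rw [hmin j (Finset.mem_range.mp hj)]
      rw [h1] at e2
      rw [e1, e3, hnm]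
      rw [hmm] at e2
      have hv := val_nonneg hβ (hu.shift (m + 1))
      have hih := ih (n + (m + 1))
      simp only [← add_assoc] at hih hv ⊢
      have a0 : b2r false = 0 := by simp [b2r]
      have a1 : b2r true = 1 := by simp [b2r]
      rw [a0]
      rw [a1] at e2
      have hp : (0 : ℝ) < β ^ (m + 1) := by positivity
      have g1 : (1 : ℝ) / β ^ (m + 1) ≤
          (1 + val β (fun i => b2r (lamB (m + 1 + i)))) / β ^ (m + 1) := by
        gcongr; linarith
      have g2 : (0 + val β (fun i => b2r (lamB (n + m + 1 + i)))) / β ^ (m + 1) ≤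
          (1 + 1 / (β - 1) / β ^ N) / β ^ (m + 1) := by
        rw [zero_add]
        exact div_le_div_of_nonneg_right hih hp.le
      have g3 : 1 / (β - 1) / β ^ N / β ^ (m + 1) ≤ 1 / (β - 1) / β ^ (N + 1) := by
        rw [div_div, ← pow_add]
        gcongr
        · exact hβ.le
        · omega
      rw [add_div 1] at g2
      linarith
  have hlim : Tendsto (fun N : ℕ => 1 + 1 / (β - 1) / β ^ N) atTop (nhds (1 + 0)) := by
    refine tendsto_const_nhds.add ?_
    exact tendsto_const_nhds.div_atTop (tendsto_pow_atTop_atTop_of_one_lt hβ)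
  rw [add_zero] at hlim
  exact ge_of_tendsto' hlim fun N => key N n

/-- A sequence of value `< 1` in base `β ≤ β_c` is lexicographically at most `λ`. -/
lemma lex_of_val {β bc : ℝ} (hβ : 1 < β) (hle : β ≤ bc)
    (h1 : val bc (fun i => b2r (lamB i)) = 1) (s : ℕ → Bool)
    (hs : val β (fun i => b2r (s i)) < 1) (m : ℕ) (hag : ∀ j < m, s j = lamB j)
    (hm : s m = true) : lamB m = true := by
  by_contra hc
  have hc' : lamB m = false := by simpa using hc
  have h0 : 0 < β := by linarith
  have hbc : 1 < bc := by linarith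
  have e1 := val_first hβ (b2r_unit s) (m := m)
  have e2 := val_first hbc (b2r_unit lamB) (m := m)
  have ht := lam_tail_val hbc h1 (m + 1)
  have hv := val_nonneg hβ ((b2r_unit s).shift (m + 1))
  have a0 : b2r false = 0 := by simp [b2r]
  have a1 : b2r true = 1 := by simp [b2r]
  rw [hm, a1] at e1
  rw [hc', a0, h1] at e2
  have e3 : ∑ i ∈ Finset.range m, b2r (lamB i) / bc ^ (i + 1) ≤
      ∑ i ∈ Finset.range m, b2r (s i) / β ^ (i + 1) := by
    refine Finset.sum_le_sum fun j hj => ?_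
    rw [hag j (Finset.mem_range.mp hj)]
    have := (b2r_unit lamB j).1
    gcongr
  have g1 : (0 + val bc (fun i => b2r (lamB (m + 1 + i)))) / bc ^ (m + 1) ≤ 1 / bc ^ (m + 1) := by
    have : 0 < bc := by linarith
    gcongr; linarith
  have g2 : 1 / bc ^ (m + 1) ≤ 1 / β ^ (m + 1) := by gcongr
  have g3 : 1 / β ^ (m + 1) ≤ (1 + val β (fun i => b2r (s (m + 1 + i)))) / β ^ (m + 1) := by
    gcongr; linarith
  linarith

/-! ### Identification of `λ` -/

lemma lamB_theta (n i : ℕ) (hi : i + 1 < 3 * 2 ^ n) :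
    lamB (3 * 2 ^ n + i) = if i % 3 = 1 then lamB i else !lamB i := by
  have h3 : i % 3 = 0 ∨ i % 3 = 1 ∨ i % 3 = 2 := by omega
  rcases h3 with h | h | h
  · obtain ⟨a, rfl⟩ : ∃ a, i = 3 * a := ⟨i / 3, by omega⟩
    rw [← mul_add, lamB0, lamB0, tm_pow_add n a (by omega)]
    simp
  · obtain ⟨a, rfl⟩ : ∃ a, i = 3 * a + 1 := ⟨i / 3, by omega⟩
    rw [← add_assoc, ← mul_add, lamB1, lamB1]
    simp
  · obtain ⟨a, rfl⟩ : ∃ a, i = 3 * a + 2 := ⟨i / 3, by omega⟩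
    rw [← add_assoc, ← mul_add, lamB2, lamB2, add_assoc, tm_pow_add n (a + 1) (by omega), h]
    simp

lemma tm_pow (n : ℕ) : tm (2 ^ n) = true := by
  induction n with
  | zero => exact tm_one
  | succ n ih => rw [pow_succ, mul_comm, tm_even, ih]

lemma tB_length (n : ℕ) : (tB n).length = 3 * 2 ^ n := by
  induction n with
  | zero => rfl
  | succ n ih =>
    have : 0 < 2 ^ n := by positivity
    simp only [tB, plusBlock, thetaBlock, List.length_append, List.length_mapIdx,
      List.length_dropLast, ih, List.length_singleton, pow_succ]
    omega

lemma plus_length (n : ℕ) : (plusBlock (tB n)).length = 3 * 2 ^ n := by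
  have : 0 < 2 ^ n := by positivity
  simp only [plusBlock, List.length_append, List.length_dropLast, tB_length, List.length_singleton]
  omega

lemma lamB_last (n : ℕ) : lamB (3 * 2 ^ n - 1) = true := by
  have : 0 < 2 ^ n := by positivity
  rw [show 3 * 2 ^ n - 1 = 3 * (2 ^ n - 1) + 2 by omega, lamB2,
    show 2 ^ n - 1 + 1 = 2 ^ n by omega, tm_pow]

lemma plus_get (n : ℕ) (h : ∀ i, i + 1 < 3 * 2 ^ n → (tB n)[i]? = some (lamB i).toNat)
    (i : ℕ) (hi : i < 3 * 2 ^ n) : (plusBlock (tB n))[i]? = some (lamB i).toNat := by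
  unfold plusBlock
  by_cases hlt : i + 1 < 3 * 2 ^ n
  · rw [List.getElem?_append_left (by simp [tB_length]; omega), List.getElem?_dropLast,
      if_pos (by rw [tB_length]; omega), h i hlt]
  · have hi' : i = 3 * 2 ^ n - 1 := by omega
    rw [List.getElem?_append_right (by simp [tB_length]; omega)]
    rw [hi', lamB_last]
    simp [tB_length]

lemma tB_get (n : ℕ) : ∀ i, i + 1 < 3 * 2 ^ n → (tB n)[i]? = some (lamB i).toNat := by
  induction n with
  | zero =>
    intro i hi
    have l0 : lamB 0 = true := by have := lamB0 0; simpa [tm_zero] using this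
    have l1 : lamB 1 = false := lamB1 0
    have : i < 2 := by omega
    interval_cases i
    · simp [tB, l0]
    · simp [tB, l1]
  | succ n ih =>
    intro i hi
    rw [pow_succ] at hi
    rw [tB]
    by_cases hlt : i < 3 * 2 ^ n
    · rw [List.getElem?_append_left (by rw [plus_length]; exact hlt), plus_get n ih i hlt]
    · obtain ⟨j, rfl⟩ : ∃ j, i = 3 * 2 ^ n + j := ⟨i - 3 * 2 ^ n, by omega⟩
      rw [List.getElem?_append_right (by rw [plus_length]; omega), plus_length,
        Nat.add_sub_cancel_left, thetaBlock, List.getElem?_mapIdx, plus_get n ih j (by omega),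
        lamB_theta n j (by omega)]
      simp only [Option.map_some]
      congr 1
      split_ifs
      · rfl
      · cases lamB j <;> rfl

lemma lamSeq_eq (i : ℕ) : lamSeq i = (lamB i).toNat := by
  have h : i + 1 < 3 * 2 ^ (i + 1) := by
    have := Nat.lt_two_pow_self (n := i + 1)
    omega
  rw [lamSeq, List.getD_eq_getElem?_getD, tB_get (i + 1) i h]
  rfl

lemma lam_val {bc : ℝ} (h : SumsToOne bc lamSeq) : val bc (fun i => b2r (lamB i)) = 1 := by
  unfold SumsToOne at h
  rw [← h, val]
  congr 1
  funext i
  rw [lamSeq_eq]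
  cases lamB i <;> simp [b2r]

/-! ### Geometry of the overlap region -/

/-- The three digits. -/
def emb (l : Fin 3) : ℝ × ℝ := if l = 0 then (1, 0) else if l = 1 then (0, 1) else (0, 0)

lemma emb_mem (l : Fin 3) : emb l ∈ OmegaR := by
  unfold emb OmegaR
  split_ifs <;> simp

lemma exists_emb {d : ℝ × ℝ} (h : d ∈ OmegaR) : ∃ l, d = emb l := by
  rcases h with h | h | h
  · exact ⟨2, by rw [h]; simp [emb]⟩
  · exact ⟨0, by rw [h]; simp [emb]⟩
  · exact ⟨1, by rw [h]; simp [emb]⟩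

lemma emb_inj {a b : Fin 3} (h : emb a = emb b) : a = b := by
  fin_cases a <;> fin_cases b <;> simp [emb] at h ⊢

/-- Value of the indicator sequence of a letter. -/
def cval (β : ℝ) (w : ℕ → Fin 3) (l : Fin 3) : ℝ := val β (fun i => b2r (decide (w i = l)))

lemma ind_unit (w : ℕ → Fin 3) (l : Fin 3) : UnitSeq (fun i => b2r (decide (w i = l))) :=
  b2r_unit (fun i => decide (w i = l))

lemma cval_nonneg {β : ℝ} (hβ : 1 < β) (w : ℕ → Fin 3) (l : Fin 3) : 0 ≤ cval β w l :=
  val_nonneg hβ (ind_unit w l)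

lemma cval_sum {β : ℝ} (hβ : 1 < β) (w : ℕ → Fin 3) :
    cval β w 0 + cval β w 1 + cval β w 2 = 1 / (β - 1) := by
  have h := ((((ind_unit w 0).summable hβ).hasSum).add (((ind_unit w 1).summable hβ).hasSum)).add
    (((ind_unit w 2).summable hβ).hasSum)
  refine h.unique ?_
  have e : (fun i : ℕ => b2r (decide (w i = 0)) / β ^ (i + 1) + b2r (decide (w i = 1)) / β ^ (i + 1)
      + b2r (decide (w i = 2)) / β ^ (i + 1)) = fun i : ℕ => 1 / β ^ (i + 1) := by
    funext i
    rw [← add_div, ← add_div]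
    congr 1
    generalize w i = a
    fin_cases a <;> simp [b2r]
  rw [e]
  exact hasSum_one hβ

lemma tsum_emb {β : ℝ} (hβ : 1 < β) (w : ℕ → Fin 3) :
    ∑' i : ℕ, (β ^ (i + 1))⁻¹ • emb (w i) = (cval β w 0, cval β w 1) := by
  have h := (((ind_unit w 0).summable hβ).hasSum).prodMk (((ind_unit w 1).summable hβ).hasSum)
  refine HasSum.tsum_eq ?_
  have e : (fun i : ℕ => (β ^ (i + 1))⁻¹ • emb (w i)) = fun i : ℕ =>
      (b2r (decide (w i = 0)) / β ^ (i + 1), b2r (decide (w i = 1)) / β ^ (i + 1)) := by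
    funext i
    generalize w i = a
    fin_cases a <;> simp [b2r, emb]
  rw [e]
  exact h

lemma mem_Delta {β : ℝ} (hβ : 1 < β) (x : ℝ × ℝ) :
    x ∈ Delta β ↔ 0 ≤ x.1 ∧ 0 ≤ x.2 ∧ x.1 + x.2 ≤ 1 / (β - 1) := by
  have hr : 0 < 1 / (β - 1) := by
    have : 0 < β - 1 := by linarith
    positivity
  constructor
  · intro hx
    have hconv : Convex ℝ {x : ℝ × ℝ | 0 ≤ x.1 ∧ 0 ≤ x.2 ∧ x.1 + x.2 ≤ 1 / (β - 1)} := by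
      intro p hp q hq a b ha hb hab
      simp only [Set.mem_ofPred_eq, Prod.fst_add, Prod.snd_add, Prod.smul_fst, Prod.smul_snd,
        smul_eq_mul] at *
      obtain ⟨p1, p2, p3⟩ := hp
      obtain ⟨q1, q2, q3⟩ := hq
      refine ⟨by positivity, by positivity, ?_⟩
      have e1 := mul_le_mul_of_nonneg_left p3 ha
      have e2 := mul_le_mul_of_nonneg_left q3 hb
      have e3 : a * (1 / (β - 1)) + b * (1 / (β - 1)) = 1 / (β - 1) := by
        rw [← add_mul, hab, one_mul]
      linarith
    refine convexHull_min ?_ hconv hx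
    rintro y ⟨d, hd, rfl⟩
    choose w hw using fun i => exists_emb (hd i)
    simp only [hw, tsum_emb hβ]
    have h0 := cval_nonneg hβ w 0
    have h1 := cval_nonneg hβ w 1
    have h2 := cval_nonneg hβ w 2
    have h3 := cval_sum hβ w
    exact ⟨h0, h1, by simp only; linarith⟩
  · rintro ⟨h1, h2, h3⟩
    have hvert : ∀ l : Fin 3, (1 / (β - 1)) • emb l ∈ Delta β := by
      intro l
      apply subset_convexHull
      refine ⟨fun _ => emb l, fun _ => emb_mem l, ?_⟩
      have := (hasSum_one hβ).smul_const (emb l)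
      simp only [one_div] at this ⊢
      exact this.tsum_eq.symm
    have hcv : Convex ℝ (Delta β) := convex_convexHull ℝ _
    have := hcv.sum_mem (t := Finset.univ) (w := ![x.1 * (β - 1), x.2 * (β - 1),
      1 - x.1 * (β - 1) - x.2 * (β - 1)]) (z := fun l : Fin 3 => (1 / (β - 1)) • emb l) ?_ ?_
      (fun l _ => hvert l)
    · have hne : β - 1 ≠ 0 := by linarith
      have e : ∑ i : Fin 3, (![x.1 * (β - 1), x.2 * (β - 1),
          1 - x.1 * (β - 1) - x.2 * (β - 1)] i) • ((1 / (β - 1)) • emb i) = x := by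
        simp only [Fin.sum_univ_three]
        ext
        · simp [emb]; field_simp
        · simp [emb]; field_simp
      rwa [e] at this
    · have hp : 0 ≤ β - 1 := by linarith
      have h4 : (x.1 + x.2) * (β - 1) ≤ 1 := by
        rwa [le_div_iff₀ (by linarith)] at h3
      intro i _
      fin_cases i
      · exact mul_nonneg h1 hp
      · exact mul_nonneg h2 hp
      · show 0 ≤ 1 - x.1 * (β - 1) - x.2 * (β - 1)
        linarith
    · simp [Fin.sum_univ_three]

lemma mem_fmap {β : ℝ} (hβ : 1 < β) (c x : ℝ × ℝ) :
    x ∈ fmap β c '' Delta β ↔ β • x - c ∈ Delta β := by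
  have h0 : β ≠ 0 := by linarith
  constructor
  · rintro ⟨y, hy, rfl⟩
    unfold fmap
    rwa [smul_smul, mul_inv_cancel₀ h0, one_smul, add_sub_cancel_right]
  · intro h
    refine ⟨_, h, ?_⟩
    unfold fmap
    rw [sub_add_cancel, smul_smul, inv_mul_cancel₀ h0, one_smul]

lemma mem_fmap_cval {β : ℝ} (hβ : 1 < β) (w : ℕ → Fin 3) (l : Fin 3) :
    (cval β w 0, cval β w 1) ∈ fmap β (emb l) '' Delta β ↔ 1 ≤ β * cval β w l := by
  rw [mem_fmap hβ, mem_Delta hβ]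
  have h0 := mul_nonneg (by linarith : (0 : ℝ) ≤ β) (cval_nonneg hβ w 0)
  have h1 := mul_nonneg (by linarith : (0 : ℝ) ≤ β) (cval_nonneg hβ w 1)
  have h2 := mul_nonneg (by linarith : (0 : ℝ) ≤ β) (cval_nonneg hβ w 2)
  have h3 : β * cval β w 0 + β * cval β w 1 + β * cval β w 2 = 1 / (β - 1) + 1 := by
    rw [← mul_add, ← mul_add, cval_sum hβ]
    have : β - 1 ≠ 0 := by linarith
    field_simp
    ring
  fin_cases l <;> simp [emb] at h3 ⊢
  · intro a; exact ⟨by linarith, by linarith⟩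
  · constructor
    · rintro ⟨a, b, c⟩; linarith
    · intro a; exact ⟨by linarith, by linarith, by linarith⟩
  · constructor
    · rintro ⟨a, b, c⟩; linarith
    · intro a; exact ⟨by linarith, by linarith, by linarith⟩

lemma mem_Ofat {β : ℝ} (hβ : 1 < β) (w : ℕ → Fin 3) :
    (cval β w 0, cval β w 1) ∈ Ofat β ↔
      ∃ l l' : Fin 3, l ≠ l' ∧ 1 ≤ β * cval β w l ∧ 1 ≤ β * cval β w l' := by
  unfold Ofat
  simp only [Set.mem_iUnion, exists_prop]
  constructor
  · rintro ⟨c, hc, d, hd, hne, h1, h2⟩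
    obtain ⟨l, rfl⟩ := exists_emb hc
    obtain ⟨l', rfl⟩ := exists_emb hd
    exact ⟨l, l', fun h => hne (by rw [h]), (mem_fmap_cval hβ w l).mp h1,
      (mem_fmap_cval hβ w l').mp h2⟩
  · rintro ⟨l, l', hne, h1, h2⟩
    exact ⟨emb l, emb_mem l, emb l', emb_mem l', fun h => hne (emb_inj h),
      (mem_fmap_cval hβ w l).mpr h1, (mem_fmap_cval hβ w l').mpr h2⟩

lemma cval_step {β : ℝ} (hβ : 1 < β) (w : ℕ → Fin 3) (l : Fin 3) (n : ℕ) :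
    β * cval β (fun i => w (n + i)) l =
      (if w n = l then 1 else 0) + cval β (fun i => w (n + 1 + i)) l := by
  have := val_step hβ ((ind_unit w l).shift n)
  simp only [← add_assoc, add_zero] at this
  unfold cval
  rw [this]
  simp [b2r]

lemma univoque_val {β : ℝ} (hβ : 1 < β) (w : ℕ → Fin 3) (hU : (fun i => emb (w i)) ∈ Ufat β)
    (l : Fin 3) (n : ℕ) (hn : w n ≠ l) : cval β (fun i => w (n + 1 + i)) l < 1 := by
  by_contra hc
  push Not at hc
  apply hU.2 n
  rw [tsum_emb hβ (fun i => w (n + i)), mem_Ofat hβ]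
  refine ⟨l, w n, hn.symm, ?_, ?_⟩
  · rw [cval_step hβ, if_neg hn]; linarith
  · rw [cval_step hβ, if_pos rfl]
    have := cval_nonneg hβ (fun i => w (n + 1 + i)) (w n)
    linarith

/-! ### Base two: the defining set of `β_k` is nonempty -/

lemma cval_pos {β : ℝ} (hβ : 1 < β) (w : ℕ → Fin 3) (l : Fin 3) (h : ∃ i, w i = l) :
    0 < cval β w l := by
  obtain ⟨i, hi⟩ := h
  have h0 : 0 < β := by linarith
  refine ((ind_unit w l).summable hβ).tsum_pos (fun j => div_nonneg (ind_unit w l j).1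
    (by positivity)) i ?_
  simp only [hi, decide_true, b2r, if_true]
  positivity

lemma nonempty_aux (k : ℕ) (hk : 2 ≤ k) :
    ∃ d ∈ Ufat 2, SmallestPeriod d k := by
  obtain ⟨w, hw⟩ : ∃ w : ℕ → Fin 3, w = fun i => if k ∣ i then 0 else 2 := ⟨_, rfl⟩
  have hw0 : ∀ n, ∃ i, w (n + i) = 0 := by
    intro n
    refine ⟨n * (k - 1), ?_⟩
    have : k ∣ n + n * (k - 1) := by
      refine ⟨n, ?_⟩
      obtain ⟨k', rfl⟩ : ∃ k', k = k' + 1 := ⟨k - 1, by omega⟩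
      simp; ring
    rw [hw]; simp [this]
  have hw2 : ∀ n, ∃ i, w (n + i) = 2 := by
    intro n
    by_cases h : k ∣ n
    · refine ⟨1, ?_⟩
      have : ¬ k ∣ n + 1 := by
        intro h'
        have := (Nat.dvd_add_right h).mp h'
        have := Nat.le_of_dvd one_pos this
        omega
      rw [hw]; simp [this]
    · exact ⟨0, by rw [hw]; simp [h]⟩
  have hw1 : ∀ n, w n ≠ 1 := by
    intro n; rw [hw]
    by_cases h : k ∣ n <;> simp [h]
  have h12 : (1 : ℝ) < 2 := by norm_num
  refine ⟨fun i => emb (w i), ⟨fun i => emb_mem _, fun n => ?_⟩, by omega, fun i => ?_,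
    fun j hj hjk => ⟨0, ?_⟩⟩
  · rw [tsum_emb h12 (fun i => w (n + i)), mem_Ofat h12]
    rintro ⟨l, l', hne, h1, h2⟩
    have key : ∀ l, l ≠ w n → 2 * cval 2 (fun i => w (n + i)) l < 1 := by
      intro l hl
      rw [cval_step h12, if_neg hl.symm, zero_add]
      have hs := cval_sum h12 (fun i => w (n + 1 + i))
      have p0 := cval_pos h12 (fun i => w (n + 1 + i)) 0 (hw0 (n + 1))
      have p2 := cval_pos h12 (fun i => w (n + 1 + i)) 2 (hw2 (n + 1))
      have p1 := cval_nonneg h12 (fun i => w (n + 1 + i)) 1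
      have e : (1 : ℝ) / (2 - 1) = 1 := by norm_num
      rw [e] at hs
      fin_cases l
      · show cval 2 _ 0 < 1
        linarith
      · show cval 2 _ 1 < 1
        linarith
      · show cval 2 _ 2 < 1
        linarith
    by_cases hl : l = w n
    · have := key l' (by rw [← hl]; exact hne.symm)
      linarith
    · have := key l hl
      linarith
  · rw [hw]
    simp [Nat.dvd_add_self_right]
  · intro h
    have h' := emb_inj h
    rw [hw] at h'
    have : ¬ k ∣ j := fun hd => by have := Nat.le_of_dvd hj hd; omega
    simp [this] at h'

/-- For every k ≥ 2 not of the form 3·2ⁿ, one has β_k ≥ β_c. -/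
theorem stmt12 (k : ℕ) (hk : 2 ≤ k) (hnot : ¬ ∃ n : ℕ, k = 3 * 2 ^ n)
    (bc : ℝ) (hbc : FatSierpinski.IsBetaC bc) :
    bc ≤ FatSierpinski.betaK k := by
  have hbc1 := hbc.1.1
  have hlam := lam_val hbc.2
  unfold betaK
  refine le_csInf ?_ ?_
  · obtain ⟨d, hd, hP⟩ := nonempty_aux k hk
    exact ⟨2, ⟨by norm_num, le_refl _⟩, d, hd, hP⟩
  · rintro β ⟨⟨hβ, -⟩, d, hd, hP⟩
    by_contra hlt
    push Not at hlt
    choose w hw using fun i => exists_emb (hd.1 i)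
    have hdw : d = fun i => emb (w i) := funext hw
    rw [hdw] at hd hP
    refine hnot (comb_main w k hk ⟨hP.1, fun i => emb_inj (hP.2.1 i), fun j hj hjk => ?_⟩ ?_)
    · obtain ⟨i, hi⟩ := hP.2.2 j hj hjk
      exact ⟨i, fun h => hi (by show emb _ = emb _; rw [h])⟩
    · intro l n hn m hag hm
      exact lex_of_val hβ hlt.le hlam (fun j => decide (w (n + 1 + j) = l))
        (univoque_val hβ w hd l n hn) m hag (by simpa using hm)

end FatSierpinski
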